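/- Assume the Euler-discretized MCARMA state space system (hypotheses (i) and (ii) of the context). Then for every k ∈ {1,…,d} and every t ∈ ℝ the multivariate ARMA/CARMA transformation relation holds: x_k(t+ph) = x_k(t+(p−1)h) − h^p Σ_{s=1}^{d} α_{(k−1)d+s}^{(p)} x_s(t) + h^{p−1} Σ_{r=1}^{m} β_{(k−1)m+r}^{(0)} ΔL_r(t) − Σ_{l=2}^{p} Σ_{s=1}^{d} α_{(k−1)d+s}^{(p−l+1)} ( h^{p−l+1} Σ_{n=0}^{l−1} (−1)^n C(l−1,n) x_s(t+(l−1−n)h) − Σ_{w=0}^{l−2} h^{p−w−1} Σ_{r=1}^{m} β_{(s−1)m+r}^{(p−l+w+1)} Σ_{v=0}^{w} (−1)^v C(w,v) ΔL_r(t+(w−v)h) ) − Σ_{n=1}^{p−1} (−1)^n C(p−1,n) ( x_k(t+(p−n)h) − x_k(t+(p−1−n)h) ) + Σ_{w=0}^{p−2} h^{p−w−2} Σ_{r=1}^{m} β_{(k−1)m+r}^{(w+1)} Σ_{v=0}^{w} (−1)^v C(w,v) ( ΔL_r(t+(w−v+1)h) − ΔL_r(t+(w−v)h) ), where C(·,·)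 denotes binomial coefficients. In particular, x_k(t+ph) is a linear combination of the 0 to p−1 lagged values of x_1,…,x_d and of the increments ΔL_1,…,ΔL_m, i.e. the approximated solution is a VARMA process. -/

import Mathlib

/-- Forward difference iterates, written as in the paper. -/
def mcD (h : ℝ) (n : ℕ) (f : ℝ → ℝ) (t : ℝ) : ℝ :=
  ∑ v ∈ Finset.range (n + 1), (-1 : ℝ) ^ v * (n.choose v : ℝ) * f (t + ((n : ℝ) - v) * h)

theorem mcD_zero (h : ℝ) (f : ℝ → ℝ) (t : ℝ) : mcD h 0 f t = f t := by
  simp [mcD]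

theorem mcD_succ (h : ℝ) (n : ℕ) (f : ℝ → ℝ) (t : ℝ) :
    mcD h (n + 1) f t = mcD h n f (t + h) - mcD h n f t := by
  unfold mcD
  rw [Finset.sum_range_succ']
  have e1 : ∀ v ∈ Finset.range (n + 1), (-1 : ℝ) ^ (v + 1) * ((n + 1).choose (v + 1) : ℝ) *
      f (t + (((n + 1 : ℕ) : ℝ) - ((v + 1 : ℕ) : ℝ)) * h)
      = (-1 : ℝ) ^ (v + 1) * (n.choose (v + 1) : ℝ) *
          f (t + h + ((n : ℝ) - ((v + 1 : ℕ) : ℝ)) * h)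
        - (-1 : ℝ) ^ v * (n.choose v : ℝ) * f (t + ((n : ℝ) - v) * h) := by
    intro v _
    rw [Nat.choose_succ_succ]
    have a1 : t + (((n + 1 : ℕ) : ℝ) - ((v + 1 : ℕ) : ℝ)) * h = t + ((n : ℝ) - v) * h := by
      push_cast; ring
    have a2 : t + h + ((n : ℝ) - ((v + 1 : ℕ) : ℝ)) * h = t + ((n : ℝ) - v) * h := by
      push_cast; ring
    rw [a1, a2]
    push_cast
    ring
  rw [Finset.sum_congr rfl e1, Finset.sum_sub_distrib]
  have e2 := Finset.sum_range_succ' (fun v : ℕ => (-1 : ℝ) ^ v * (n.choose v : ℝ) *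
    f (t + h + ((n : ℝ) - v) * h)) (n + 1)
  rw [Finset.sum_range_succ] at e2
  simp only [Nat.choose_succ_self, Nat.cast_zero, mul_zero, zero_mul, add_zero] at e2
  rw [e2]
  have a3 : t + (((n + 1 : ℕ) : ℝ) - ((0 : ℕ) : ℝ)) * h = t + h + ((n : ℝ) - 0) * h := by
    push_cast; ring
  rw [a3]
  simp only [Nat.choose_zero_right]
  ring

theorem mcD_shift (h : ℝ) (n : ℕ) (f : ℝ → ℝ) (t : ℝ) :
    mcD h (n + 1) f t = ∑ v ∈ Finset.range (n + 1), (-1 : ℝ) ^ v * (n.choose v : ℝ) *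
      (f (t + ((n : ℝ) - v + 1) * h) - f (t + ((n : ℝ) - v) * h)) := by
  rw [mcD_succ]
  unfold mcD
  rw [← Finset.sum_sub_distrib]
  refine Finset.sum_congr rfl fun v _ => ?_
  rw [show t + h + ((n : ℝ) - v) * h = t + ((n : ℝ) - v + 1) * h by ring]
  ring

theorem mc_key (p d m : ℕ) (h : ℝ) (hh0 : 0 < h)
    (βc : ℕ → ℕ → ℝ) (x : ℕ → ℝ → ℝ) (ΔL : ℕ → ℝ → ℝ)
    (hi : ∀ b k : ℕ, 1 ≤ b → b ≤ p - 1 → 1 ≤ k → k ≤ d → ∀ t : ℝ,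
      x ((b - 1) * d + k + d) t
        = (x ((b - 1) * d + k) (t + h) - x ((b - 1) * d + k) t
            - ∑ r ∈ Finset.Icc 1 m, βc (p - b) ((k - 1) * m + r) * ΔL r t) / h)
    (k : ℕ) (hk1 : 1 ≤ k) (hkd : k ≤ d) (j : ℕ) (hj : j ≤ p - 1) : ∀ t : ℝ,
    h ^ j * x (j * d + k) t = mcD h j (x k) t
      - ∑ w ∈ Finset.range j, h ^ (j - 1 - w) *
          ∑ r ∈ Finset.Icc 1 m, βc (p - j + w) ((k - 1) * m + r) * mcD h w (ΔL r) t := by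
  induction j with
  | zero => intro t; simp [mcD_zero]
  | succ j ih =>
    intro t
    have ih := ih (by omega)
    have h1 := hi (j + 1) k (by omega) hj hk1 hkd t
    rw [Nat.add_sub_cancel, show j * d + k + d = (j + 1) * d + k by ring,
      eq_div_iff hh0.ne'] at h1
    rw [show h ^ (j + 1) * x ((j + 1) * d + k) t = h ^ j * (x ((j + 1) * d + k) t * h) by ring,
      h1, mul_sub, mul_sub, ih, ih, mcD_succ, Finset.sum_range_succ']
    have e : ∀ w ∈ Finset.range j, h ^ (j + 1 - 1 - (w + 1)) *
          ∑ r ∈ Finset.Icc 1 m, βc (p - (j + 1) + (w + 1)) ((k - 1) * m + r) *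
            mcD h (w + 1) (ΔL r) t
        = h ^ (j - 1 - w) *
          ∑ r ∈ Finset.Icc 1 m, βc (p - j + w) ((k - 1) * m + r) * mcD h w (ΔL r) (t + h)
        - h ^ (j - 1 - w) *
          ∑ r ∈ Finset.Icc 1 m, βc (p - j + w) ((k - 1) * m + r) * mcD h w (ΔL r) t := by
      intro w hw
      have hw := Finset.mem_range.1 hw
      rw [show j + 1 - 1 - (w + 1) = j - 1 - w by omega,
        show p - (j + 1) + (w + 1) = p - j + w by omega, ← mul_sub, ← Finset.sum_sub_distrib]
      simp only [mcD_succ, mul_sub]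
    rw [Finset.sum_congr rfl e, Finset.sum_sub_distrib]
    simp only [mcD_zero, Nat.sub_zero, Nat.add_zero, Nat.add_sub_cancel]
    ring

/-- **Theorem 1 of the paper: the multivariate ARMA/CARMA transformation
relation.**
Fix `p ≥ 2`, `d ≥ 1`, `m ≥ 1` and a step size `h ∈ (0,1]`.  Coefficients
`αc j ((k-1)d+s)` (the `(k,s)` entry of `A_j`) and `βc κ ((k-1)m+r)` (the `(k,r)` entry
of `β_{p−κ}`) are given, together with `x 1, …, x (pd) : ℝ → ℝ` and
`ΔL 1, …, ΔL m : ℝ → ℝ` satisfying hypotheses (i) and (ii) of the Euler-discretized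
MCARMA state space system.  Then for every `k ∈ {1,…,d}` and `t ∈ ℝ` the transformation
relation displayed in Theorem 1 holds; in particular `x k (t + ph)` is a linear
combination of the `0` to `p−1` lagged values of `x 1,…,x d` and of `ΔL 1,…,ΔL m`. -/
theorem mcarma_transformation_relation
    (p d m : ℕ) (hp : 2 ≤ p) (hd : 1 ≤ d) (hm : 1 ≤ m)
    (h : ℝ) (hh0 : 0 < h) (hh1 : h ≤ 1)
    (αc : ℕ → ℕ → ℝ) (βc : ℕ → ℕ → ℝ)
    (x : ℕ → ℝ → ℝ) (ΔL : ℕ → ℝ → ℝ)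
    -- (i) Euler-discretized recursive equations (blocks 1,…,p−1)
    (hi : ∀ b k : ℕ, 1 ≤ b → b ≤ p - 1 → 1 ≤ k → k ≤ d → ∀ t : ℝ,
      x ((b - 1) * d + k + d) t
        = (x ((b - 1) * d + k) (t + h) - x ((b - 1) * d + k) t
            - ∑ r ∈ Finset.Icc 1 m, βc (p - b) ((k - 1) * m + r) * ΔL r t) / h)
    -- (ii) Euler-discretized autoregressive equations (block p)
    (hii : ∀ k : ℕ, 1 ≤ k → k ≤ d → ∀ t : ℝ,
      x ((p - 1) * d + k) (t + h) - x ((p - 1) * d + k) t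
        = -h * ∑ l ∈ Finset.Icc 1 p, ∑ s ∈ Finset.Icc 1 d,
              αc (p - l + 1) ((k - 1) * d + s) * x ((l - 1) * d + s) t
          + ∑ r ∈ Finset.Icc 1 m, βc 0 ((k - 1) * m + r) * ΔL r t) :
    ∀ k : ℕ, 1 ≤ k → k ≤ d → ∀ t : ℝ,
      x k (t + (p : ℝ) * h)
        = x k (t + ((p : ℝ) - 1) * h)
          - h ^ p * ∑ s ∈ Finset.Icc 1 d, αc p ((k - 1) * d + s) * x s t
          + h ^ (p - 1) * ∑ r ∈ Finset.Icc 1 m, βc 0 ((k - 1) * m + r) * ΔL r t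
          - ∑ l ∈ Finset.Icc 2 p, ∑ s ∈ Finset.Icc 1 d,
              αc (p - l + 1) ((k - 1) * d + s) *
                (h ^ (p - l + 1) * ∑ n ∈ Finset.range l,
                    (-1 : ℝ) ^ n * ((l - 1).choose n : ℝ) *
                      x s (t + ((l : ℝ) - 1 - n) * h)
                  - ∑ w ∈ Finset.range (l - 1), h ^ (p - w - 1) *
                      ∑ r ∈ Finset.Icc 1 m, βc (p - l + w + 1) ((s - 1) * m + r) *
                        ∑ v ∈ Finset.range (w + 1),
                          (-1 : ℝ) ^ v * (w.choose v : ℝ) * ΔL r (t + ((w : ℝ) - v) * h))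
          - ∑ n ∈ Finset.Icc 1 (p - 1),
              (-1 : ℝ) ^ n * ((p - 1).choose n : ℝ) *
                (x k (t + ((p : ℝ) - n) * h) - x k (t + ((p : ℝ) - 1 - n) * h))
          + ∑ w ∈ Finset.range (p - 1), h ^ (p - w - 2) *
              ∑ r ∈ Finset.Icc 1 m, βc (w + 1) ((k - 1) * m + r) *
                ∑ v ∈ Finset.range (w + 1),
                  (-1 : ℝ) ^ v * (w.choose v : ℝ) *
                    (ΔL r (t + ((w : ℝ) - v + 1) * h) - ΔL r (t + ((w : ℝ) - v) * h)) := by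
  intro k hk1 hkd t
  have key := mc_key p d m h hh0 βc x ΔL hi
  -- the autoregressive sum
  have hA : ∀ l ∈ Finset.Icc 2 p, ∑ s ∈ Finset.Icc 1 d,
              αc (p - l + 1) ((k - 1) * d + s) *
                (h ^ (p - l + 1) * ∑ n ∈ Finset.range l,
                    (-1 : ℝ) ^ n * ((l - 1).choose n : ℝ) *
                      x s (t + ((l : ℝ) - 1 - n) * h)
                  - ∑ w ∈ Finset.range (l - 1), h ^ (p - w - 1) *
                      ∑ r ∈ Finset.Icc 1 m, βc (p - l + w + 1) ((s - 1) * m + r) *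
                        ∑ v ∈ Finset.range (w + 1),
                          (-1 : ℝ) ^ v * (w.choose v : ℝ) * ΔL r (t + ((w : ℝ) - v) * h))
      = h ^ p * ∑ s ∈ Finset.Icc 1 d,
          αc (p - l + 1) ((k - 1) * d + s) * x ((l - 1) * d + s) t := by
    intro l hl
    obtain ⟨hl2, hlp⟩ := Finset.mem_Icc.1 hl
    rw [Finset.mul_sum]
    refine Finset.sum_congr rfl fun s hs => ?_
    obtain ⟨hs1, hsd⟩ := Finset.mem_Icc.1 hs
    obtain ⟨j, rfl⟩ : ∃ j, l = j + 1 := ⟨l - 1, by omega⟩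
    have hk := key s hs1 hsd j (by omega) t
    simp only [Nat.add_sub_cancel]
    rw [show h ^ p = h ^ (p - (j + 1) + 1) * h ^ j by rw [← pow_add]; congr 1; omega,
      show ∀ a b c y : ℝ, a * b * (c * y) = c * (a * (b * y)) by intros; ring, hk]
    congr 1
    rw [mul_sub, Finset.mul_sum (Finset.range j)]
    congr 1
    · unfold mcD
      congr 1
      refine Finset.sum_congr rfl fun n _ => ?_
      push_cast
      rw [add_sub_cancel_right]
    · refine Finset.sum_congr rfl fun w hw => ?_
      have hw := Finset.mem_range.1 hw
      rw [← mul_assoc, ← pow_add, show p - (j + 1) + 1 + (j - 1 - w) = p - w - 1 by omega,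
        show p - (j + 1) + w + 1 = p - j + w by omega]
      rfl
  rw [Finset.sum_congr rfl hA, ← Finset.mul_sum]
  simp only [← mcD_shift]
  obtain ⟨q, rfl⟩ : ∃ q, p = q + 1 := ⟨p - 1, by omega⟩
  simp only [Nat.add_sub_cancel] at *
  have hx := mcD_shift h q (x k) t
  rw [Finset.range_eq_Ico, Finset.sum_eq_sum_Ico_succ_bot (by omega)] at hx
  have h2 := hii k hk1 hkd t
  rw [← Finset.add_sum_Ioc_eq_sum_Icc (by omega : 1 ≤ q + 1)] at h2
  have k1 := key k hk1 hkd q le_rfl (t + h)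
  have k2 := key k hk1 hkd q le_rfl t
  have hB : ∑ w ∈ Finset.range q, h ^ (q + 1 - w - 2) *
        ∑ r ∈ Finset.Icc 1 m, βc (w + 1) ((k - 1) * m + r) * mcD h (w + 1) (ΔL r) t
      = ∑ w ∈ Finset.range q, h ^ (q - 1 - w) *
          ∑ r ∈ Finset.Icc 1 m, βc (q + 1 - q + w) ((k - 1) * m + r) * mcD h w (ΔL r) (t + h)
        - ∑ w ∈ Finset.range q, h ^ (q - 1 - w) *
          ∑ r ∈ Finset.Icc 1 m, βc (q + 1 - q + w) ((k - 1) * m + r) * mcD h w (ΔL r) t := by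
    rw [← Finset.sum_sub_distrib]
    refine Finset.sum_congr rfl fun w hw => ?_
    rw [← mul_sub, ← Finset.sum_sub_distrib, show q + 1 - w - 2 = q - 1 - w by omega,
      show q + 1 - q + w = w + 1 by omega]
    simp only [mcD_succ, mul_sub]
  rw [hB]
  have hC : ∑ n ∈ Finset.Icc 1 q, (-1 : ℝ) ^ n * (q.choose n : ℝ) *
        (x k (t + (((q + 1 : ℕ) : ℝ) - n) * h) - x k (t + (((q + 1 : ℕ) : ℝ) - 1 - n) * h))
      = ∑ n ∈ Finset.Ico (0 + 1) (q + 1), (-1 : ℝ) ^ n * (q.choose n : ℝ) *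
        (x k (t + ((q : ℝ) - n + 1) * h) - x k (t + ((q : ℝ) - n) * h)) := by
    refine Finset.sum_congr (by ext; simp [Nat.succ_le_iff]) fun n _ => ?_
    rw [show t + (((q + 1 : ℕ) : ℝ) - n) * h = t + ((q : ℝ) - n + 1) * h by push_cast; ring,
      show t + (((q + 1 : ℕ) : ℝ) - 1 - n) * h = t + ((q : ℝ) - n) * h by push_cast; ring]
  rw [hC]
  have hI : Finset.Ioc 1 (q + 1) = Finset.Icc 2 (q + 1) := by ext; simp; omega
  rw [hI] at h2
  rw [mcD_succ] at hx
  simp only [pow_zero, Nat.choose_zero_right, Nat.cast_zero, Nat.cast_one, one_mul, sub_zero] at hx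
  simp only [Nat.sub_self, zero_mul, zero_add] at h2
  rw [show t + ((q + 1 : ℕ) : ℝ) * h = t + ((q : ℝ) + 1) * h by push_cast; ring,
    show t + (((q + 1 : ℕ) : ℝ) - 1) * h = t + (q : ℝ) * h by push_cast; ring]
  simp only [zero_add, Nat.add_sub_cancel] at h2 hx ⊢
  have h3 := congrArg (fun z => h ^ q * z) h2
  simp only [mul_sub] at h3
  rw [k1, k2] at h3
  linear_combination h3 - hx
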